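/- arXiv:2202.03234 — 7 statements merged into one kernel-verified Lean document; each statement's English description precedes it below -/
import Mathlib

section
/- In the parent-space setup, the identification operator J = ι_∞* ∘ ι_n satisfies ‖J‖ ≤ 1, and each of the three quantities ‖(id_{H_n} − J* ∘ J) ∘ R_n‖, ‖(id_{H_∞} − J ∘ J*) ∘ R_∞‖ and ‖J ∘ R_n − R_∞ ∘ J‖ is bounded above by ‖D‖, the operator norm of Weidmann's lifted resolvent difference. (In particular, generalised norm resolvent convergence in the sense of Weidmann implies QUE-convergence with the same convergence speed.) -/
open ContinuousLinearMap

/-!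
Since `ι* ι = id` and `κ* κ = id`, sandwiching the lifted difference `D = ι R ι* - κ S κ*` between
contractions recovers all three QUE quantities of `J = κ* ι`. Indeed `κ* D ι = J R - S J`, while the
projection `id - κ κ*` onto the orthogonal complement of the range of `κ` annihilates the second
term of `D`, whence `ι* (id - κ κ*) D ι = (id - J* J) R`. The bound for `(id - J J*) S` is the last
one with the two spaces exchanged, which replaces `J` by `J*` and `D` by `-D`.
-/

section Contraction

variable {𝕜 E F G H : Type*} [NontriviallyNormedField 𝕜]
  [SeminormedAddCommGroup E] [NormedSpace 𝕜 E] [SeminormedAddCommGroup F] [NormedSpace 𝕜 F]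
  [SeminormedAddCommGroup G] [NormedSpace 𝕜 G] [SeminormedAddCommGroup H] [NormedSpace 𝕜 H]

theorem norm_comp_le_one {A : F →L[𝕜] G} {B : E →L[𝕜] F} (hA : ‖A‖ ≤ 1) (hB : ‖B‖ ≤ 1) :
    ‖A ∘L B‖ ≤ 1 :=
  (opNorm_comp_le A B).trans (mul_le_one₀ hA (norm_nonneg B) hB)

theorem norm_comp_comp_le_of_norm_le_one {A : G →L[𝕜] H} {B : E →L[𝕜] F}
    (hA : ‖A‖ ≤ 1) (hB : ‖B‖ ≤ 1) (T : F →L[𝕜] G) : ‖A ∘L T ∘L B‖ ≤ ‖T‖ :=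
  calc ‖A ∘L T ∘L B‖
    _ ≤ ‖A‖ * ‖T ∘L B‖ := opNorm_comp_le A (T ∘L B)
    _ ≤ ‖T ∘L B‖ := mul_le_of_le_one_left (norm_nonneg _) hA
    _ ≤ ‖T‖ * ‖B‖ := opNorm_comp_le T B
    _ ≤ ‖T‖ := mul_le_of_le_one_right (norm_nonneg T) hB

end Contraction

section HilbertSpace

variable {𝕜 E F H : Type*} [RCLike 𝕜]
  [NormedAddCommGroup E] [InnerProductSpace 𝕜 E] [CompleteSpace E]
  [NormedAddCommGroup F] [InnerProductSpace 𝕜 F] [CompleteSpace F]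
  [NormedAddCommGroup H] [InnerProductSpace 𝕜 H] [CompleteSpace H]
  {ι : E →L[𝕜] H} {κ : F →L[𝕜] H}

theorem adjoint_apply_apply_of_adjoint_comp_self
    (hι : adjoint ι ∘L ι = ContinuousLinearMap.id 𝕜 E) (x : E) : adjoint ι (ι x) = x :=
  DFunLike.congr_fun hι x

theorem norm_le_one_of_adjoint_comp_self
    (hι : adjoint ι ∘L ι = ContinuousLinearMap.id 𝕜 E) : ‖ι‖ ≤ 1 :=
  ι.opNorm_le_bound zero_le_one fun x ↦ by
    rw [one_mul, (norm_map_iff_adjoint_comp_self ι).mpr hι x]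

theorem norm_adjoint_le_one_of_adjoint_comp_self
    (hι : adjoint ι ∘L ι = ContinuousLinearMap.id 𝕜 E) : ‖adjoint ι‖ ≤ 1 :=
  (adjoint.norm_map ι).trans_le (norm_le_one_of_adjoint_comp_self hι)

theorem isStarProjection_comp_adjoint
    (hι : adjoint ι ∘L ι = ContinuousLinearMap.id 𝕜 E) : IsStarProjection (ι ∘L adjoint ι) where
  isIdempotentElem := by
    ext x
    simp [adjoint_apply_apply_of_adjoint_comp_self hι]
  isSelfAdjoint := by
    rw [isSelfAdjoint_iff', adjoint_comp, adjoint_adjoint]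

theorem norm_id_sub_comp_adjoint_le_one
    (hι : adjoint ι ∘L ι = ContinuousLinearMap.id 𝕜 E) :
    ‖ContinuousLinearMap.id 𝕜 H - ι ∘L adjoint ι‖ ≤ 1 :=
  (isStarProjection_comp_adjoint hι).one_sub.norm_le

/-- The identification operator `J = κ* ι : E → F`, which compares two Hilbert spaces mapped into a
common parent space. It is defined for bounded operators `ι` and `κ` rather than for bundled
isometries. -/
noncomputable def identificationOperator (ι : E →L[𝕜] H) (κ : F →L[𝕜] H) : E →L[𝕜] F :=
  adjoint κ ∘L ι

/-- Weidmann's lifted resolvent difference `D = ι R ι* - κ S κ*`, which compares `R` on `E` with `S`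
on `F` inside the parent space `H`. The resolvents enter as arbitrary bounded operators. -/
noncomputable def liftedResolventDifference (ι : E →L[𝕜] H) (κ : F →L[𝕜] H)
    (R : E →L[𝕜] E) (S : F →L[𝕜] F) : H →L[𝕜] H :=
  ι ∘L R ∘L adjoint ι - κ ∘L S ∘L adjoint κ

theorem adjoint_identificationOperator (ι : E →L[𝕜] H) (κ : F →L[𝕜] H) :
    adjoint (identificationOperator ι κ) = identificationOperator κ ι := by
  rw [identificationOperator, adjoint_comp, adjoint_adjoint, identificationOperator]

theorem norm_liftedResolventDifference_comm (ι : E →L[𝕜] H) (κ : F →L[𝕜] H)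
    (R : E →L[𝕜] E) (S : F →L[𝕜] F) :
    ‖liftedResolventDifference ι κ R S‖ = ‖liftedResolventDifference κ ι S R‖ :=
  norm_sub_rev _ _

theorem norm_identificationOperator_le_one
    (hι : adjoint ι ∘L ι = ContinuousLinearMap.id 𝕜 E)
    (hκ : adjoint κ ∘L κ = ContinuousLinearMap.id 𝕜 F) : ‖identificationOperator ι κ‖ ≤ 1 :=
  norm_comp_le_one (norm_adjoint_le_one_of_adjoint_comp_self hκ)
    (norm_le_one_of_adjoint_comp_self hι)

theorem identificationOperator_comp_sub_comp_eq
    (hι : adjoint ι ∘L ι = ContinuousLinearMap.id 𝕜 E)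
    (hκ : adjoint κ ∘L κ = ContinuousLinearMap.id 𝕜 F) (R : E →L[𝕜] E) (S : F →L[𝕜] F) :
    identificationOperator ι κ ∘L R - S ∘L identificationOperator ι κ =
      adjoint κ ∘L liftedResolventDifference ι κ R S ∘L ι := by
  ext x
  simp [identificationOperator, liftedResolventDifference,
    adjoint_apply_apply_of_adjoint_comp_self hι, adjoint_apply_apply_of_adjoint_comp_self hκ]

theorem id_sub_comp_adjoint_comp_liftedResolventDifference
    (hκ : adjoint κ ∘L κ = ContinuousLinearMap.id 𝕜 F) (R : E →L[𝕜] E) (S : F →L[𝕜] F) :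
    (ContinuousLinearMap.id 𝕜 H - κ ∘L adjoint κ) ∘L liftedResolventDifference ι κ R S =
      (ContinuousLinearMap.id 𝕜 H - κ ∘L adjoint κ) ∘L ι ∘L R ∘L adjoint ι := by
  ext x
  simp [liftedResolventDifference, adjoint_apply_apply_of_adjoint_comp_self hκ]

theorem id_sub_adjoint_comp_identificationOperator_comp_eq
    (hι : adjoint ι ∘L ι = ContinuousLinearMap.id 𝕜 E)
    (hκ : adjoint κ ∘L κ = ContinuousLinearMap.id 𝕜 F) (R : E →L[𝕜] E) (S : F →L[𝕜] F) :
    (ContinuousLinearMap.id 𝕜 E -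
        adjoint (identificationOperator ι κ) ∘L identificationOperator ι κ) ∘L R =
      (adjoint ι ∘L (ContinuousLinearMap.id 𝕜 H - κ ∘L adjoint κ)) ∘L
        liftedResolventDifference ι κ R S ∘L ι := by
  rw [comp_assoc, ← comp_assoc _ _ ι, id_sub_comp_adjoint_comp_liftedResolventDifference hκ,
    adjoint_identificationOperator]
  ext x
  simp [identificationOperator, adjoint_apply_apply_of_adjoint_comp_self hι]

theorem norm_identificationOperator_comp_sub_comp_le
    (hι : adjoint ι ∘L ι = ContinuousLinearMap.id 𝕜 E)
    (hκ : adjoint κ ∘L κ = ContinuousLinearMap.id 𝕜 F) (R : E →L[𝕜] E) (S : F →L[𝕜] F) :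
    ‖identificationOperator ι κ ∘L R - S ∘L identificationOperator ι κ‖ ≤
      ‖liftedResolventDifference ι κ R S‖ := by
  rw [identificationOperator_comp_sub_comp_eq hι hκ]
  exact norm_comp_comp_le_of_norm_le_one (norm_adjoint_le_one_of_adjoint_comp_self hκ)
    (norm_le_one_of_adjoint_comp_self hι) _

theorem norm_id_sub_adjoint_comp_identificationOperator_comp_le
    (hι : adjoint ι ∘L ι = ContinuousLinearMap.id 𝕜 E)
    (hκ : adjoint κ ∘L κ = ContinuousLinearMap.id 𝕜 F) (R : E →L[𝕜] E) (S : F →L[𝕜] F) :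
    ‖(ContinuousLinearMap.id 𝕜 E -
        adjoint (identificationOperator ι κ) ∘L identificationOperator ι κ) ∘L R‖ ≤
      ‖liftedResolventDifference ι κ R S‖ := by
  rw [id_sub_adjoint_comp_identificationOperator_comp_eq hι hκ R S]
  exact norm_comp_comp_le_of_norm_le_one
    (norm_comp_le_one (norm_adjoint_le_one_of_adjoint_comp_self hι)
      (norm_id_sub_comp_adjoint_le_one hκ))
    (norm_le_one_of_adjoint_comp_self hι) _

theorem norm_id_sub_identificationOperator_comp_adjoint_comp_le
    (hι : adjoint ι ∘L ι = ContinuousLinearMap.id 𝕜 E)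
    (hκ : adjoint κ ∘L κ = ContinuousLinearMap.id 𝕜 F) (R : E →L[𝕜] E) (S : F →L[𝕜] F) :
    ‖(ContinuousLinearMap.id 𝕜 F -
        identificationOperator ι κ ∘L adjoint (identificationOperator ι κ)) ∘L S‖ ≤
      ‖liftedResolventDifference ι κ R S‖ := by
  rw [adjoint_identificationOperator, ← adjoint_identificationOperator κ ι,
    norm_liftedResolventDifference_comm]
  exact norm_id_sub_adjoint_comp_identificationOperator_comp_le hκ hι S R

end HilbertSpace

theorem weidmann_implies_que_general {𝕜 Hn Hinf H : Type*} [RCLike 𝕜]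
    [NormedAddCommGroup Hn] [InnerProductSpace 𝕜 Hn] [CompleteSpace Hn]
    [NormedAddCommGroup Hinf] [InnerProductSpace 𝕜 Hinf] [CompleteSpace Hinf]
    [NormedAddCommGroup H] [InnerProductSpace 𝕜 H] [CompleteSpace H]
    (ιn : Hn →L[𝕜] H) (ιinf : Hinf →L[𝕜] H)
    (hιn : adjoint ιn ∘L ιn = ContinuousLinearMap.id 𝕜 Hn)
    (hιinf : adjoint ιinf ∘L ιinf = ContinuousLinearMap.id 𝕜 Hinf)
    (Rn : Hn →L[𝕜] Hn) (Rinf : Hinf →L[𝕜] Hinf)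
    (J : Hn →L[𝕜] Hinf) (D : H →L[𝕜] H)
    (hJ : J = adjoint ιinf ∘L ιn)
    (hD : D = ιn ∘L Rn ∘L adjoint ιn - ιinf ∘L Rinf ∘L adjoint ιinf) :
    ‖J‖ ≤ 1 ∧
    ‖(ContinuousLinearMap.id 𝕜 Hn - adjoint J ∘L J) ∘L Rn‖ ≤ ‖D‖ ∧
    ‖(ContinuousLinearMap.id 𝕜 Hinf - J ∘L adjoint J) ∘L Rinf‖ ≤ ‖D‖ ∧
    ‖J ∘L Rn - Rinf ∘L J‖ ≤ ‖D‖ := by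
  subst hJ hD
  exact ⟨norm_identificationOperator_le_one hιn hιinf,
    norm_id_sub_adjoint_comp_identificationOperator_comp_le hιn hιinf Rn Rinf,
    norm_id_sub_identificationOperator_comp_adjoint_comp_le hιn hιinf Rn Rinf,
    norm_identificationOperator_comp_sub_comp_le hιn hιinf Rn Rinf⟩

/-- Weidmann's convergence implies QUE-convergence (with the same speed):
in the parent-space setup, `J = ι∞* ∘ ιₙ` is a contraction and all three
QUE-quantities are bounded by the norm of the lifted resolvent difference `D`. -/
theorem weidmann_implies_que {Hn Hinf H : Type*}
    [NormedAddCommGroup Hn] [InnerProductSpace ℂ Hn] [CompleteSpace Hn]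
    [NormedAddCommGroup Hinf] [InnerProductSpace ℂ Hinf] [CompleteSpace Hinf]
    [NormedAddCommGroup H] [InnerProductSpace ℂ H] [CompleteSpace H]
    (ιn : Hn →L[ℂ] H) (ιinf : Hinf →L[ℂ] H)
    (hιn : (adjoint ιn) ∘L ιn = ContinuousLinearMap.id ℂ Hn)
    (hιinf : (adjoint ιinf) ∘L ιinf = ContinuousLinearMap.id ℂ Hinf)
    (Rn : Hn →L[ℂ] Hn) (Rinf : Hinf →L[ℂ] Hinf)
    (J : Hn →L[ℂ] Hinf) (D : H →L[ℂ] H)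
    (hJ : J = (adjoint ιinf) ∘L ιn)
    (hD : D = ιn ∘L Rn ∘L (adjoint ιn) - ιinf ∘L Rinf ∘L (adjoint ιinf)) :
    ‖J‖ ≤ 1 ∧
    ‖(ContinuousLinearMap.id ℂ Hn - (adjoint J) ∘L J) ∘L Rn‖ ≤ ‖D‖ ∧
    ‖(ContinuousLinearMap.id ℂ Hinf - J ∘L (adjoint J)) ∘L Rinf‖ ≤ ‖D‖ ∧
    ‖J ∘L Rn - Rinf ∘L J‖ ≤ ‖D‖ :=
  weidmann_implies_que_general ιn ιinf hιn hιinf Rn Rinf J D hJ hD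
end

section
/- Let H₁, H₂ be complex Hilbert spaces, J : H₁ → H₂ a bounded operator with ‖J‖ ≤ 1, R₁ : H₁ → H₁ and R₂ : H₂ → H₂ bounded operators, and δ ≥ 0. If ‖(id_{H₁} − J* ∘ J) ∘ R₁‖ ≤ δ and ‖J ∘ R₁ − R₂ ∘ J‖ ≤ δ, then ‖R₁‖ ≤ ‖R₂‖ + 2δ. -/
open ContinuousLinearMap

/-!
Replacing `R₁` by `J* J R₁` and then `J R₁` by `R₂ J` costs one defect of norm at most `δ` each:
`R₁ = (id - J* J) R₁ + J* (J R₁ - R₂ J) + J* R₂ J`, where `‖J*‖ = ‖J‖ ≤ 1`.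
-/

section Seminormed

variable {𝕜 E E' F F' : Type*} [NontriviallyNormedField 𝕜]
  [SeminormedAddCommGroup E] [NormedSpace 𝕜 E] [SeminormedAddCommGroup E'] [NormedSpace 𝕜 E']
  [SeminormedAddCommGroup F] [NormedSpace 𝕜 F] [SeminormedAddCommGroup F'] [NormedSpace 𝕜 F']

theorem opNorm_le_opNorm_id_sub_comp_comp_add (J : E →L[𝕜] F) (K : E' →L[𝕜] F')
    (K' : F' →L[𝕜] E') (R₁ : E →L[𝕜] E') (R₂ : F →L[𝕜] F') :
    ‖R₁‖ ≤ ‖(ContinuousLinearMap.id 𝕜 E' - K' ∘L K) ∘L R₁‖ +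
      ‖K'‖ * (‖K ∘L R₁ - R₂ ∘L J‖ + ‖R₂‖ * ‖J‖) := by
  have decomposition : R₁ = (ContinuousLinearMap.id 𝕜 E' - K' ∘L K) ∘L R₁ +
      K' ∘L ((K ∘L R₁ - R₂ ∘L J) + R₂ ∘L J) := by
    ext x
    simp
  calc
    ‖R₁‖ ≤ ‖(ContinuousLinearMap.id 𝕜 E' - K' ∘L K) ∘L R₁‖ +
        ‖K' ∘L ((K ∘L R₁ - R₂ ∘L J) + R₂ ∘L J)‖ :=
      (congrArg norm decomposition).trans_le (norm_add_le _ _)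
    _ ≤ ‖(ContinuousLinearMap.id 𝕜 E' - K' ∘L K) ∘L R₁‖ +
        ‖K'‖ * ‖(K ∘L R₁ - R₂ ∘L J) + R₂ ∘L J‖ := by
      gcongr
      exact opNorm_comp_le _ _
    _ ≤ ‖(ContinuousLinearMap.id 𝕜 E' - K' ∘L K) ∘L R₁‖ +
        ‖K'‖ * (‖K ∘L R₁ - R₂ ∘L J‖ + ‖R₂‖ * ‖J‖) := by
      gcongr
      exact norm_add_le_of_le le_rfl (opNorm_comp_le _ _)

theorem resolvent_norm_estimate_general {J : E →L[𝕜] F} (hJ : ‖J‖ ≤ 1) {K : E' →L[𝕜] F'}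
    {K' : F' →L[𝕜] E'} (hK' : ‖K'‖ ≤ 1) {R₁ : E →L[𝕜] E'} {R₂ : F →L[𝕜] F'} {δ : ℝ}
    (h₁ : ‖(ContinuousLinearMap.id 𝕜 E' - K' ∘L K) ∘L R₁‖ ≤ δ)
    (h₂ : ‖K ∘L R₁ - R₂ ∘L J‖ ≤ δ) :
    ‖R₁‖ ≤ ‖R₂‖ + 2 * δ :=
  calc
    ‖R₁‖ ≤ ‖(ContinuousLinearMap.id 𝕜 E' - K' ∘L K) ∘L R₁‖ +
        ‖K'‖ * (‖K ∘L R₁ - R₂ ∘L J‖ + ‖R₂‖ * ‖J‖) :=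
      opNorm_le_opNorm_id_sub_comp_comp_add J K K' R₁ R₂
    _ ≤ δ + 1 * (δ + ‖R₂‖ * 1) := by gcongr
    _ = ‖R₂‖ + 2 * δ := by ring

end Seminormed

/-- Norm estimate for the resolvent: `‖R₁‖ ≤ ‖R₂‖ + 2δ` under the QUE-estimates. -/
theorem resolvent_norm_estimate {H₁ H₂ : Type*}
    [NormedAddCommGroup H₁] [InnerProductSpace ℂ H₁] [CompleteSpace H₁]
    [NormedAddCommGroup H₂] [InnerProductSpace ℂ H₂] [CompleteSpace H₂]
    (J : H₁ →L[ℂ] H₂) (hJ : ‖J‖ ≤ 1)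
    (R₁ : H₁ →L[ℂ] H₁) (R₂ : H₂ →L[ℂ] H₂) (δ : ℝ) (hδ : 0 ≤ δ)
    (h₁ : ‖(ContinuousLinearMap.id ℂ H₁ - (adjoint J) ∘L J) ∘L R₁‖ ≤ δ)
    (h₂ : ‖J ∘L R₁ - R₂ ∘L J‖ ≤ δ) :
    ‖R₁‖ ≤ ‖R₂‖ + 2 * δ := by
  have hJ_adjoint : ‖adjoint J‖ ≤ 1 := (adjoint.norm_map J).trans_le hJ
  exact resolvent_norm_estimate_general hJ hJ_adjoint h₁ h₂
end

section
/- In the parent-space setup, with P_n := ι_n ∘ ι_n* and P_∞ := ι_∞ ∘ ι_∞*, let δ ≥ 0 and assume P_n ∘ P_∞ = P_∞ ∘ P_n together with the estimates ‖J ∘ R_n − R_∞ ∘ J‖ ≤ δ, ‖(id_{H_n} − J* ∘ J) ∘ R_n‖ ≤ δ and ‖(id_{H_∞} − J ∘ J*) ∘ R_∞*‖ ≤ δ. Then ‖D‖ ≤ 3δ. (So when the projections commute, QUE-convergence implies Weidmann's convergence with the same order of convergence speed.) -/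
open ContinuousLinearMap

/-!
Write `P = ι ∘ ι*` and `Q = κ ∘ κ*` for the range projections of the two embeddings and
`J = κ* ∘ ι`. If `P` and `Q` commute, then `ι ∘ J* ∘ J = P ∘ Q ∘ ι = Q ∘ P ∘ ι = κ ∘ J`, and
`κ ∘ J ∘ J* = ι ∘ J*` by symmetry. The terms created by lifting the three defects
`J ∘ R - S ∘ J`, `(id - J* ∘ J) ∘ R` and `S ∘ (id - J ∘ J*)` to the parent space therefore
telescope to `ι ∘ R ∘ ι* - κ ∘ S ∘ κ*`, and lifting does not increase norms.
-/

section

variable {𝕜 E F H : Type*} [RCLike 𝕜]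
  [NormedAddCommGroup E] [InnerProductSpace 𝕜 E] [CompleteSpace E]
  [NormedAddCommGroup F] [InnerProductSpace 𝕜 F]
  [NormedAddCommGroup H] [InnerProductSpace 𝕜 H] [CompleteSpace H]

/-- Partial isometries between Hilbert spaces, encoded by the identity `ι ∘ ι* ∘ ι = ι`, which
makes both `ι* ∘ ι` and `ι ∘ ι*` orthogonal projections. -/
def IsPartialIsometry (ι : E →L[𝕜] H) : Prop :=
  ι ∘L adjoint ι ∘L ι = ι

namespace IsPartialIsometry

theorem of_adjoint_comp_self_eq_id {ι : E →L[𝕜] H}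
    (h : adjoint ι ∘L ι = ContinuousLinearMap.id 𝕜 E) : IsPartialIsometry ι := by
  rw [IsPartialIsometry, h, comp_id]

theorem isStarProjection_adjoint_comp_self {ι : E →L[𝕜] H} (hι : IsPartialIsometry ι) :
    IsStarProjection (adjoint ι ∘L ι) where
  isIdempotentElem := congrArg (adjoint ι ∘L ·) hι
  isSelfAdjoint := by rw [isSelfAdjoint_iff', adjoint_comp, adjoint_adjoint]

theorem norm_le_one {ι : E →L[𝕜] H} (hι : IsPartialIsometry ι) : ‖ι‖ ≤ 1 := by
  have hsq : ‖ι‖ * ‖ι‖ ≤ 1 := by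
    rw [← norm_adjoint_comp_self]
    exact hι.isStarProjection_adjoint_comp_self.norm_le
  nlinarith [norm_nonneg ι]

end IsPartialIsometry

/-- The lift `κ ∘ T ∘ ι*` to the parent space of an operator `T` from `E` to `F`. Weidmann's
resolvent difference is `parentLift ι ι R - parentLift κ κ S`. -/
noncomputable def parentLift (ι : E →L[𝕜] H) (κ : F →L[𝕜] H) (T : E →L[𝕜] F) : H →L[𝕜] H :=
  κ ∘L T ∘L adjoint ι

theorem parentLift_sub (ι : E →L[𝕜] H) (κ : F →L[𝕜] H) (T U : E →L[𝕜] F) :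
    parentLift ι κ (T - U) = parentLift ι κ T - parentLift ι κ U := by
  simp only [parentLift, sub_comp, comp_sub]

variable [CompleteSpace F]

theorem norm_parentLift_le {ι : E →L[𝕜] H} {κ : F →L[𝕜] H} (hι : IsPartialIsometry ι)
    (hκ : IsPartialIsometry κ) (T : E →L[𝕜] F) : ‖parentLift ι κ T‖ ≤ ‖T‖ :=
  calc ‖κ ∘L T ∘L adjoint ι‖ ≤ ‖κ‖ * ‖T ∘L adjoint ι‖ := opNorm_comp_le _ _
    _ ≤ ‖κ‖ * (‖T‖ * ‖adjoint ι‖) := by gcongr; exact opNorm_comp_le _ _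
    _ = ‖κ‖ * (‖T‖ * ‖ι‖) := by rw [LinearIsometryEquiv.norm_map]
    _ ≤ 1 * (‖T‖ * 1) := by gcongr; exacts [hκ.norm_le_one, hι.norm_le_one]
    _ = ‖T‖ := by rw [one_mul, mul_one]

theorem norm_comp_eq_norm_comp_adjoint_of_isSelfAdjoint {A : E →L[𝕜] E} (hA : IsSelfAdjoint A)
    (T : E →L[𝕜] F) : ‖T ∘L A‖ = ‖A ∘L adjoint T‖ := by
  rw [← LinearIsometryEquiv.norm_map adjoint, adjoint_comp, hA.adjoint_eq]

/-- The identification operator `J = κ* ∘ ι` from `E` to `F`, which compares two Hilbert spaces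
mapped into a common parent space by `ι` and `κ`. -/
noncomputable def identification (ι : E →L[𝕜] H) (κ : F →L[𝕜] H) : E →L[𝕜] F :=
  adjoint κ ∘L ι

theorem adjoint_identification (ι : E →L[𝕜] H) (κ : F →L[𝕜] H) :
    adjoint (identification ι κ) = identification κ ι := by
  rw [identification, identification, adjoint_comp, adjoint_adjoint]

theorem isSelfAdjoint_id_sub_identification_comp_identification (ι : E →L[𝕜] H) (κ : F →L[𝕜] H) :
    IsSelfAdjoint (ContinuousLinearMap.id 𝕜 F - identification ι κ ∘L identification κ ι) := by
  simp only [isSelfAdjoint_iff', map_sub, adjoint_id, adjoint_comp, adjoint_identification]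

theorem comp_identification_comp_identification {ι : E →L[𝕜] H} {κ : F →L[𝕜] H}
    (hι : IsPartialIsometry ι) (hcomm : Commute (ι ∘L adjoint ι) (κ ∘L adjoint κ)) :
    ι ∘L identification κ ι ∘L identification ι κ = κ ∘L identification ι κ :=
  calc ι ∘L identification κ ι ∘L identification ι κ
      = ((ι ∘L adjoint ι) ∘L (κ ∘L adjoint κ)) ∘L ι := rfl
    _ = ((κ ∘L adjoint κ) ∘L (ι ∘L adjoint ι)) ∘L ι := congrArg (· ∘L ι) hcomm.eq
    _ = (κ ∘L adjoint κ) ∘L (ι ∘L adjoint ι ∘L ι) := rfl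
    _ = κ ∘L identification ι κ := congrArg ((κ ∘L adjoint κ) ∘L ·) hι

theorem identification_comp_identification_comp_adjoint {ι : E →L[𝕜] H} {κ : F →L[𝕜] H}
    (hκ : IsPartialIsometry κ) (hcomm : Commute (ι ∘L adjoint ι) (κ ∘L adjoint κ)) :
    identification ι κ ∘L identification κ ι ∘L adjoint κ = identification ι κ ∘L adjoint ι := by
  simpa only [adjoint_comp, adjoint_identification, comp_assoc] using
    congrArg adjoint (comp_identification_comp_identification hκ hcomm.symm)

theorem parentLift_id_sub_comp {ι : E →L[𝕜] H} {κ : F →L[𝕜] H}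
    (hι : IsPartialIsometry ι) (hcomm : Commute (ι ∘L adjoint ι) (κ ∘L adjoint κ))
    (R : E →L[𝕜] E) :
    parentLift ι ι
        ((ContinuousLinearMap.id 𝕜 E - identification κ ι ∘L identification ι κ) ∘L R) =
      parentLift ι ι R - parentLift ι κ (identification ι κ ∘L R) := by
  have hJ := comp_identification_comp_identification hι hcomm
  simpa only [parentLift, sub_comp, comp_sub, id_comp, comp_assoc] using
    congrArg (fun T ↦ ι ∘L R ∘L adjoint ι - T ∘L R ∘L adjoint ι) hJ

theorem parentLift_comp_id_sub {ι : E →L[𝕜] H} {κ : F →L[𝕜] H}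
    (hκ : IsPartialIsometry κ) (hcomm : Commute (ι ∘L adjoint ι) (κ ∘L adjoint κ))
    (S : F →L[𝕜] F) :
    parentLift κ κ
        (S ∘L (ContinuousLinearMap.id 𝕜 F - identification ι κ ∘L identification κ ι)) =
      parentLift κ κ S - parentLift ι κ (S ∘L identification ι κ) := by
  simp only [parentLift, sub_comp, comp_sub, comp_id, comp_assoc,
    identification_comp_identification_comp_adjoint hκ hcomm]

theorem parentLift_sub_parentLift {ι : E →L[𝕜] H} {κ : F →L[𝕜] H}
    (hι : IsPartialIsometry ι) (hκ : IsPartialIsometry κ)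
    (hcomm : Commute (ι ∘L adjoint ι) (κ ∘L adjoint κ))
    (R : E →L[𝕜] E) (S : F →L[𝕜] F) :
    parentLift ι ι R - parentLift κ κ S =
      parentLift ι κ (identification ι κ ∘L R - S ∘L identification ι κ) +
      parentLift ι ι
        ((ContinuousLinearMap.id 𝕜 E - identification κ ι ∘L identification ι κ) ∘L R) -
      parentLift κ κ
        (S ∘L (ContinuousLinearMap.id 𝕜 F - identification ι κ ∘L identification κ ι)) := by
  rw [parentLift_sub, parentLift_id_sub_comp hι hcomm, parentLift_comp_id_sub hκ hcomm]
  abel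

theorem que_implies_weidmann_commuting_projections_general {ι : E →L[𝕜] H} {κ : F →L[𝕜] H}
    (hι : IsPartialIsometry ι) (hκ : IsPartialIsometry κ)
    (hcomm : Commute (ι ∘L adjoint ι) (κ ∘L adjoint κ))
    (R : E →L[𝕜] E) (S : F →L[𝕜] F) {J : E →L[𝕜] F} (hJ : J = adjoint κ ∘L ι) :
    ‖ι ∘L R ∘L adjoint ι - κ ∘L S ∘L adjoint κ‖ ≤
      ‖J ∘L R - S ∘L J‖ + ‖(ContinuousLinearMap.id 𝕜 E - adjoint J ∘L J) ∘L R‖ +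
        ‖(ContinuousLinearMap.id 𝕜 F - J ∘L adjoint J) ∘L adjoint S‖ := by
  obtain rfl : J = identification ι κ := hJ
  rw [adjoint_identification, ← norm_comp_eq_norm_comp_adjoint_of_isSelfAdjoint
    (isSelfAdjoint_id_sub_identification_comp_identification ι κ)]
  change ‖parentLift ι ι R - parentLift κ κ S‖ ≤ _
  rw [parentLift_sub_parentLift hι hκ hcomm]
  refine (norm_sub_le _ _).trans (add_le_add ((norm_add_le _ _).trans (add_le_add ?_ ?_)) ?_)
  · exact norm_parentLift_le hι hκ _
  · exact norm_parentLift_le hι hι _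
  · exact norm_parentLift_le hκ hκ _

end

/-- QUE-convergence implies Weidmann's convergence with the same order of speed,
provided the projections `Pn` and `P∞` commute. -/
theorem que_implies_weidmann_commuting_projections {Hn Hinf H : Type*}
    [NormedAddCommGroup Hn] [InnerProductSpace ℂ Hn] [CompleteSpace Hn]
    [NormedAddCommGroup Hinf] [InnerProductSpace ℂ Hinf] [CompleteSpace Hinf]
    [NormedAddCommGroup H] [InnerProductSpace ℂ H] [CompleteSpace H]
    (ιn : Hn →L[ℂ] H) (ιinf : Hinf →L[ℂ] H)
    (hιn : (adjoint ιn) ∘L ιn = ContinuousLinearMap.id ℂ Hn)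
    (hιinf : (adjoint ιinf) ∘L ιinf = ContinuousLinearMap.id ℂ Hinf)
    (Rn : Hn →L[ℂ] Hn) (Rinf : Hinf →L[ℂ] Hinf)
    (J : Hn →L[ℂ] Hinf) (D : H →L[ℂ] H) (Pn Pinf : H →L[ℂ] H)
    (hJ : J = (adjoint ιinf) ∘L ιn)
    (hD : D = ιn ∘L Rn ∘L (adjoint ιn) - ιinf ∘L Rinf ∘L (adjoint ιinf))
    (hPn : Pn = ιn ∘L (adjoint ιn))
    (hPinf : Pinf = ιinf ∘L (adjoint ιinf))
    (hcomm : Pn ∘L Pinf = Pinf ∘L Pn)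
    (δ : ℝ) (hδ : 0 ≤ δ)
    (h₁ : ‖J ∘L Rn - Rinf ∘L J‖ ≤ δ)
    (h₂ : ‖(ContinuousLinearMap.id ℂ Hn - (adjoint J) ∘L J) ∘L Rn‖ ≤ δ)
    (h₃ : ‖(ContinuousLinearMap.id ℂ Hinf - J ∘L (adjoint J)) ∘L (adjoint Rinf)‖ ≤ δ) :
    ‖D‖ ≤ 3 * δ := by
  subst hD hPn hPinf
  linarith [que_implies_weidmann_commuting_projections_general (.of_adjoint_comp_self_eq_id hιn)
    (.of_adjoint_comp_self_eq_id hιinf) hcomm Rn Rinf hJ]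
end

section
/- Let J : H₁ → H₂ be a contraction between complex Hilbert spaces and let W and W_∞ be its defect operators. Then W and W_∞ are self-adjoint with spectrum contained in the real interval [0,1], and their spectra agree away from the value 1: spectrum(W) \ {1} = spectrum(W_∞) \ {1}. -/
open ContinuousLinearMap

/-!
By Jacobson's lemma, `J* J` and `J J*` have the same nonzero spectrum, so `W² = 1 - J* J` and
`W∞² = 1 - J J*` have the same spectrum away from `1`. A positive operator has nonnegative spectrum
and squaring is injective on nonnegative numbers, so by spectral mapping the spectrum of a positive
operator is recovered from that of its square, with `1` corresponding to `1`. The bound `W ≤ 1`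
comes from `W² ≤ 1` because the square root is operator monotone.
-/

section CompSwap

variable {R E F : Type*} [Ring R]
  [AddCommGroup E] [TopologicalSpace E] [IsTopologicalAddGroup E] [Module R E]
  [AddCommGroup F] [TopologicalSpace F] [IsTopologicalAddGroup F] [Module R F]

theorem isUnit_one_sub_comp_swap {A : F →L[R] E} {B : E →L[R] F} (h : IsUnit (1 - A ∘L B)) :
    IsUnit (1 - B ∘L A) := by
  obtain ⟨T, right_inv, left_inv⟩ := isUnit_iff_exists.mp h
  -- The formal identity `∑ (B A)ⁿ = 1 + B (∑ (A B)ⁿ) A` suggests the inverse.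
  refine isUnit_iff_exists.mpr ⟨1 + B ∘L T ∘L A, ?_, ?_⟩
  · calc (1 - B ∘L A) * (1 + B ∘L T ∘L A)
        = 1 - B ∘L A + B ∘L ((1 - A ∘L B) * T) ∘L A := by ext x; simp [add_sub_add_comm]
      _ = 1 := by rw [right_inv]; exact sub_add_cancel _ _
  · calc (1 + B ∘L T ∘L A) * (1 - B ∘L A)
        = 1 - B ∘L A + B ∘L (T * (1 - A ∘L B)) ∘L A := by ext x; simp
      _ = 1 := by rw [left_inv]; exact sub_add_cancel _ _

end CompSwap

theorem mem_spectrum_one_sub_iff {R A : Type*} [CommRing R] [Ring A] [Algebra R A] {a : A} {r : R} :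
    r ∈ spectrum R (1 - a) ↔ 1 - r ∈ spectrum R a := by
  rw [spectrum.mem_iff, spectrum.mem_iff, ← IsUnit.neg_iff, neg_sub, map_sub, map_one,
    sub_right_comm]

section SpectrumComp

variable {𝕜 E F : Type*} [Field 𝕜]
  [AddCommGroup E] [TopologicalSpace E] [IsTopologicalAddGroup E]
  [Module 𝕜 E] [ContinuousConstSMul 𝕜 E]
  [AddCommGroup F] [TopologicalSpace F] [IsTopologicalAddGroup F]
  [Module 𝕜 F] [ContinuousConstSMul 𝕜 F]

theorem spectrum_comp_sdiff_zero_subset (A : F →L[𝕜] E) (B : E →L[𝕜] F) :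
    spectrum 𝕜 (A ∘L B) \ {0} ⊆ spectrum 𝕜 (B ∘L A) \ {0} := by
  rintro z ⟨hz, hz0⟩
  refine ⟨fun hunit => hz ?_, hz0⟩
  lift z to 𝕜ˣ using IsUnit.mk0 z hz0
  simp only [spectrum.mem_resolventSet_iff, Algebra.algebraMap_eq_smul_one, ← Units.smul_def,
    IsUnit.smul_sub_iff_sub_inv_smul] at hunit ⊢
  rw [← comp_smul] at hunit
  rw [← smul_comp]
  exact isUnit_one_sub_comp_swap hunit

theorem spectrum_comp_sdiff_zero_swap (A : F →L[𝕜] E) (B : E →L[𝕜] F) :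
    spectrum 𝕜 (A ∘L B) \ {0} = spectrum 𝕜 (B ∘L A) \ {0} :=
  (spectrum_comp_sdiff_zero_subset A B).antisymm (spectrum_comp_sdiff_zero_subset B A)

theorem spectrum_one_sub_comp_sdiff_one_swap (A : F →L[𝕜] E) (B : E →L[𝕜] F) :
    spectrum 𝕜 (1 - A ∘L B) \ {1} = spectrum 𝕜 (1 - B ∘L A) \ {1} := by
  ext z
  have hswap : 1 - z ∈ spectrum 𝕜 (A ∘L B) \ {0} ↔ 1 - z ∈ spectrum 𝕜 (B ∘L A) \ {0} := by
    rw [spectrum_comp_sdiff_zero_swap]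
  simpa [mem_spectrum_one_sub_iff, sub_eq_zero, eq_comm (a := z)] using hswap

end SpectrumComp

section PositiveElement

open scoped ComplexOrder

theorem image_ofReal_Icc (s t : ℝ) :
    (fun x : ℝ => (x : ℂ)) '' Set.Icc s t = Set.Icc (s : ℂ) (t : ℂ) := by
  ext z
  constructor
  · rintro ⟨x, ⟨hsx, hxt⟩, rfl⟩
    exact ⟨Complex.real_le_real.mpr hsx, Complex.real_le_real.mpr hxt⟩
  · rintro ⟨hsz, hzt⟩
    exact ⟨z.re, ⟨hsz.1, hzt.1⟩, Complex.ext rfl hsz.2⟩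

theorem spectrum_subset_Icc_zero_one {R A : Type*} [CommRing R] [PartialOrder R]
    [IsOrderedAddMonoid R] [Ring A] [PartialOrder A] [IsOrderedAddMonoid A] [Algebra R A]
    [NonnegSpectrumClass R A] {a : A} (ha₀ : 0 ≤ a) (ha₁ : a ≤ 1) :
    spectrum R a ⊆ Set.Icc 0 1 := by
  intro r hr
  have hr' : 1 - r ∈ spectrum R (1 - a) := by rwa [mem_spectrum_one_sub_iff, sub_sub_cancel]
  exact ⟨spectrum_nonneg_of_nonneg ha₀ hr,
    sub_nonneg.mp (spectrum_nonneg_of_nonneg (sub_nonneg.mpr ha₁) hr')⟩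

theorem le_one_of_sq_le_one {A : Type*} [CStarAlgebra A] [PartialOrder A] [StarOrderedRing A]
    {a : A} (ha : 0 ≤ a) (hsq : a ^ 2 ≤ 1) : a ≤ 1 := by
  simpa [CFC.sqrt_sq a, CFC.sqrt_one] using CFC.sqrt_le_sqrt (a ^ 2) 1 hsq

variable {A B : Type*} [Ring A] [PartialOrder A] [Algebra ℂ A] [NonnegSpectrumClass ℂ A]
  [Ring B] [PartialOrder B] [Algebra ℂ B] [NonnegSpectrumClass ℂ B]

theorem mem_spectrum_iff_sq_mem_spectrum_sq {a : A} (ha : 0 ≤ a) {z : ℂ} :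
    z ∈ spectrum ℂ a ↔ 0 ≤ z ∧ z ^ 2 ∈ spectrum ℂ (a ^ 2) := by
  refine ⟨fun hz => ⟨spectrum_nonneg_of_nonneg ha hz, spectrum.pow_mem_pow a 2 hz⟩, ?_⟩
  rintro ⟨hz, hzsq⟩
  rw [spectrum.map_pow_of_pos a two_pos] at hzsq
  obtain ⟨w, hw, hwz : w ^ 2 = z ^ 2⟩ := hzsq
  rwa [← (CFC.sq_eq_sq_iff w z (spectrum_nonneg_of_nonneg ha hw) hz).mp hwz]

theorem spectrum_sdiff_one_eq_of_sq {a : A} {b : B} (ha : 0 ≤ a) (hb : 0 ≤ b)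
    (hsq : spectrum ℂ (a ^ 2) \ {1} = spectrum ℂ (b ^ 2) \ {1}) :
    spectrum ℂ a \ {1} = spectrum ℂ b \ {1} := by
  ext z
  simp only [Set.mem_sdiff, mem_spectrum_iff_sq_mem_spectrum_sq ha,
    mem_spectrum_iff_sq_mem_spectrum_sq hb, Set.mem_singleton_iff, and_assoc, and_congr_right_iff]
  intro hz
  have hone : z = 1 ↔ z ^ 2 = 1 := by simpa using (CFC.sq_eq_sq_iff z 1 hz zero_le_one).symm
  rw [hone]
  exact Set.ext_iff.mp hsq (z ^ 2)

end PositiveElement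

section Defect

variable {H K : Type*}
  [NormedAddCommGroup H] [InnerProductSpace ℂ H] [CompleteSpace H]
  [NormedAddCommGroup K] [InnerProductSpace ℂ K] [CompleteSpace K]

theorem spectrum_subset_of_sq_eq_one_sub_adjoint_comp_self {J : H →L[ℂ] K} {W : H →L[ℂ] H}
    (hW : 0 ≤ W) (hWsq : W ^ 2 = 1 - adjoint J ∘L J) :
    spectrum ℂ W ⊆ (fun t : ℝ => (t : ℂ)) '' Set.Icc (0 : ℝ) 1 := by
  have hJJ : 0 ≤ adjoint J ∘L J := (nonneg_iff_isPositive _).mpr (isPositive_adjoint_comp_self J)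
  have hWle : W ≤ 1 := le_one_of_sq_le_one hW (hWsq.trans_le (sub_le_self 1 hJJ))
  open scoped ComplexOrder in
  simpa [image_ofReal_Icc] using spectrum_subset_Icc_zero_one (R := ℂ) hW hWle

theorem spectrum_sdiff_one_eq_of_sq_eq_one_sub_comp {A : K →L[ℂ] H} {B : H →L[ℂ] K}
    {W : H →L[ℂ] H} {V : K →L[ℂ] K} (hW : 0 ≤ W) (hV : 0 ≤ V)
    (hWsq : W ^ 2 = 1 - A ∘L B) (hVsq : V ^ 2 = 1 - B ∘L A) :
    spectrum ℂ W \ {1} = spectrum ℂ V \ {1} :=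
  spectrum_sdiff_one_eq_of_sq hW hV <| by
    rw [hWsq, hVsq, spectrum_one_sub_comp_sdiff_one_swap]

end Defect

/-- The defect operators `W` and `W∞` of a contraction `J` are self-adjoint with
spectrum in the real interval `[0,1]`, and their spectra agree away from `1`. -/
theorem defect_operator_spectra {H₁ H₂ : Type*}
    [NormedAddCommGroup H₁] [InnerProductSpace ℂ H₁] [CompleteSpace H₁]
    [NormedAddCommGroup H₂] [InnerProductSpace ℂ H₂] [CompleteSpace H₂]
    (J : H₁ →L[ℂ] H₂) (hJ : ‖J‖ ≤ 1)
    (W : H₁ →L[ℂ] H₁) (Winf : H₂ →L[ℂ] H₂)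
    (hW : W.IsPositive)
    (hWsq : W ∘L W = ContinuousLinearMap.id ℂ H₁ - (adjoint J) ∘L J)
    (hWinf : Winf.IsPositive)
    (hWinfsq : Winf ∘L Winf = ContinuousLinearMap.id ℂ H₂ - J ∘L (adjoint J)) :
    IsSelfAdjoint W ∧ IsSelfAdjoint Winf ∧
    spectrum ℂ W ⊆ (fun t : ℝ => (t : ℂ)) '' Set.Icc (0 : ℝ) 1 ∧
    spectrum ℂ Winf ⊆ (fun t : ℝ => (t : ℂ)) '' Set.Icc (0 : ℝ) 1 ∧
    spectrum ℂ W \ {1} = spectrum ℂ Winf \ {1} := by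
  have hW₀ : 0 ≤ W := (nonneg_iff_isPositive W).mpr hW
  have hWinf₀ : 0 ≤ Winf := (nonneg_iff_isPositive Winf).mpr hWinf
  have hWsq' : W ^ 2 = 1 - adjoint J ∘L J := (sq W).trans hWsq
  have hWinfsq' : Winf ^ 2 = 1 - J ∘L adjoint J := (sq Winf).trans hWinfsq
  refine ⟨hW.isSelfAdjoint, hWinf.isSelfAdjoint,
    spectrum_subset_of_sq_eq_one_sub_adjoint_comp_self hW₀ hWsq',
    spectrum_subset_of_sq_eq_one_sub_adjoint_comp_self (J := adjoint J) hWinf₀ ?_,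
    spectrum_sdiff_one_eq_of_sq_eq_one_sub_comp hW₀ hWinf₀ hWsq' hWinfsq'⟩
  rwa [adjoint_adjoint]
end

section
/- Let H_∞ be a complex Hilbert space, (H_n)_{n ∈ ℕ} a family of complex Hilbert spaces, and for each n ∈ ℕ let J_n : H_n → H_∞ be a bounded operator with ‖J_n‖ ≤ 1. Then there exist a complex Hilbert space H and bounded operators ι_n : H_n → H (n ∈ ℕ) and ι_∞ : H_∞ → H such that ι_∞* ∘ ι_∞ = id_{H_∞}, ι_n* ∘ ι_n = id_{H_n} for all n (i.e. all ι's are isometries), and ι_∞* ∘ ι_n = J_n for all n ∈ ℕ. (A parent space factorising the identification operators always exists when the identification operators are contractions.) -/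
open ContinuousLinearMap

universe u v

/-! A contraction `J` leaves the positive semidefinite form `⟪x, y⟫ - ⟪J x, J y⟫` on its domain, and
hence a defect map `D` into an inner product space with `‖J x‖ ^ 2 + ‖D x‖ ^ 2 = ‖x‖ ^ 2`. So
`x ↦ (J x, D x)` is an isometry whose first component is `J`. Giving each `J n` its own orthogonal
summand for the second component, the parent space is the completion of `Hinf ⊕ ⨁ n, G n`, where
`G n` is the target of the defect map of `J n`.
-/

section Defect

open scoped InnerProductSpace

variable {𝕜 F : Type*} {E : Type u} [RCLike 𝕜]
  [SeminormedAddCommGroup F] [InnerProductSpace 𝕜 F]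

theorem exists_linearMap_inner_eq_of_preInnerCore [AddCommGroup E] [Module 𝕜 E]
    (c : PreInnerProductSpace.Core 𝕜 E) :
    ∃ (G : Type u) (_ : NormedAddCommGroup G) (_ : InnerProductSpace 𝕜 G) (D : E →ₗ[𝕜] G),
      ∀ x y, ⟪D x, D y⟫_𝕜 = c.inner x y := by
  let : SeminormedAddCommGroup E := InnerProductSpace.Core.toSeminormedAddCommGroup (c := c)
  let : InnerProductSpace 𝕜 E := InnerProductSpace.ofCore c
  exact ⟨SeparationQuotient E, inferInstance, inferInstance, SeparationQuotient.mkCLM 𝕜 E,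
    SeparationQuotient.inner_mk_mk⟩

variable [SeminormedAddCommGroup E] [InnerProductSpace 𝕜 E]

/-- The defect form `⟪x, y⟫ - ⟪T x, T y⟫` of a contraction `T`, which measures how far `T` is from
being isometric. It is only semidefinite, so it is a `PreInnerProductSpace.Core`. -/
abbrev defectForm (T : E →L[𝕜] F) (hT : ‖T‖ ≤ 1) : PreInnerProductSpace.Core 𝕜 E where
  inner x y := ⟪x, y⟫_𝕜 - ⟪T x, T y⟫_𝕜
  conj_inner_symm x y := by simp only [map_sub, inner_conj_symm]
  re_inner_nonneg x := by
    have hx : ‖T x‖ ≤ ‖x‖ := by simpa only [one_mul] using T.le_of_opNorm_le hT x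
    simp only [map_sub, ← norm_sq_eq_re_inner]
    exact sub_nonneg.mpr (pow_le_pow_left₀ (norm_nonneg _) hx 2)
  add_left x y z := by
    simp only [map_add, inner_add_left]
    ring
  smul_left x y r := by simp only [map_smul, inner_smul_left, mul_sub]

theorem exists_norm_sq_add_norm_sq_eq_of_norm_le_one (T : E →L[𝕜] F) (hT : ‖T‖ ≤ 1) :
    ∃ (G : Type u) (_ : NormedAddCommGroup G) (_ : InnerProductSpace 𝕜 G) (D : E →ₗ[𝕜] G),
      ∀ x, ‖T x‖ ^ 2 + ‖D x‖ ^ 2 = ‖x‖ ^ 2 := by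
  obtain ⟨G, _, _, D, hD⟩ := exists_linearMap_inner_eq_of_preInnerCore (defectForm T hT)
  refine ⟨G, inferInstance, inferInstance, D, fun x => ?_⟩
  have hDx : ⟪D x, D x⟫_𝕜 = ⟪x, x⟫_𝕜 - ⟪T x, T x⟫_𝕜 := hD x x
  rw [norm_sq_eq_re_inner (𝕜 := 𝕜) (D x), hDx, map_sub, ← norm_sq_eq_re_inner,
    ← norm_sq_eq_re_inner, add_sub_cancel]

end Defect

section Column

variable {𝕜 E F G : Type*} [Semiring 𝕜]
  [SeminormedAddCommGroup E] [Module 𝕜 E]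
  [SeminormedAddCommGroup F] [Module 𝕜 F]
  [SeminormedAddCommGroup G] [Module 𝕜 G]

/-- The column operator `x ↦ (T x, D x)` into the orthogonal direct sum, bundled as an isometry.
Taking for `D` a defect map of `T` makes it an isometric lift of the contraction `T`. -/
noncomputable def columnIsometry (T : E →ₗ[𝕜] F) (D : E →ₗ[𝕜] G)
    (h : ∀ x, ‖T x‖ ^ 2 + ‖D x‖ ^ 2 = ‖x‖ ^ 2) : E →ₗᵢ[𝕜] WithLp 2 (F × G) where
  toLinearMap := (WithLp.linearEquiv 2 𝕜 (F × G)).symm ∘ₗ T.prod D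
  norm_map' x := by
    rw [← sq_eq_sq₀ (norm_nonneg _) (norm_nonneg _), WithLp.prod_norm_sq_eq_of_L2, ← h x]
    rfl

variable (𝕜 F G) in
/-- The inclusion `y ↦ (y, 0)` of the first summand of an orthogonal direct sum, which embeds the
limit space into the parent space. -/
noncomputable def inlIsometry : F →ₗᵢ[𝕜] WithLp 2 (F × G) :=
  columnIsometry LinearMap.id 0 (by simp)

open scoped InnerProductSpace in
theorem inner_inlIsometry_columnIsometry {𝕜 E F G : Type*} [RCLike 𝕜]
    [SeminormedAddCommGroup E] [Module 𝕜 E]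
    [NormedAddCommGroup F] [InnerProductSpace 𝕜 F]
    [NormedAddCommGroup G] [InnerProductSpace 𝕜 G]
    (T : E →ₗ[𝕜] F) (D : E →ₗ[𝕜] G)
    (h : ∀ x, ‖T x‖ ^ 2 + ‖D x‖ ^ 2 = ‖x‖ ^ 2) (y : F) (x : E) :
    ⟪inlIsometry 𝕜 F G y, columnIsometry T D h x⟫_𝕜 = ⟪y, T x⟫_𝕜 := by
  simp [inlIsometry, columnIsometry]

end Column

section ParentSpace

open scoped InnerProductSpace

theorem adjoint_comp_eq_of_inner_eq {𝕜 E F H : Type*} [RCLike 𝕜]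
    [TopologicalSpace E] [AddCommMonoid E] [Module 𝕜 E]
    [NormedAddCommGroup F] [InnerProductSpace 𝕜 F] [CompleteSpace F]
    [NormedAddCommGroup H] [InnerProductSpace 𝕜 H] [CompleteSpace H]
    {V : F →L[𝕜] H} {A : E →L[𝕜] H} {B : E →L[𝕜] F}
    (h : ∀ y x, ⟪V y, A x⟫_𝕜 = ⟪y, B x⟫_𝕜) : adjoint V ∘L A = B := by
  ext x
  refine ext_inner_left 𝕜 fun y => ?_
  rw [comp_apply, adjoint_inner_right, h]

universe w

theorem parent_space_exists_general {𝕜 : Type*} [RCLike 𝕜] {κ : Type w} {Hinf : Type v}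
    [NormedAddCommGroup Hinf] [InnerProductSpace 𝕜 Hinf] {Hn : κ → Type u}
    [∀ n, SeminormedAddCommGroup (Hn n)] [∀ n, InnerProductSpace 𝕜 (Hn n)]
    (J : ∀ n, Hn n →L[𝕜] Hinf) (hJ : ∀ n, ‖J n‖ ≤ 1) :
    ∃ (H : Type (max u v w)) (_ : NormedAddCommGroup H) (_ : InnerProductSpace 𝕜 H)
      (_ : CompleteSpace H) (ι : ∀ n, Hn n →ₗᵢ[𝕜] H) (ιinf : Hinf →ₗᵢ[𝕜] H),
      ∀ n y x, ⟪ιinf y, ι n x⟫_𝕜 = ⟪y, J n x⟫_𝕜 := by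
  classical
  choose G _ _ D hD using fun n => exists_norm_sq_add_norm_sq_eq_of_norm_le_one (J n) (hJ n)
  have hsingle (n : κ) (x : Hn n) :
      ‖J n x‖ ^ 2 + ‖(lp.lsingle (𝕜 := 𝕜) (E := G) 2 n ∘ₗ D n) x‖ ^ 2 = ‖x‖ ^ 2 := by
    have hnorm : ‖lp.lsingle (𝕜 := 𝕜) (E := G) 2 n (D n x)‖ = ‖D n x‖ :=
      lp.norm_single two_pos n (D n x)
    rw [LinearMap.comp_apply, hnorm, hD]
  let toParent := UniformSpace.Completion.toComplₗᵢ (𝕜 := 𝕜) (E := WithLp 2 (Hinf × lp G 2))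
  refine ⟨UniformSpace.Completion (WithLp 2 (Hinf × lp G 2)), inferInstance, inferInstance,
    inferInstance, fun n => toParent.comp (columnIsometry (J n) _ (hsingle n)),
    toParent.comp (inlIsometry 𝕜 Hinf (lp G 2)), fun n y x => ?_⟩
  exact (toParent.inner_map_map _ _).trans (inner_inlIsometry_columnIsometry _ _ _ y x)

end ParentSpace

/-- A parent space factorising the identification operators always exists, provided
the identification operators are contractions. -/
theorem parent_space_exists {Hinf : Type v}
    [NormedAddCommGroup Hinf] [InnerProductSpace ℂ Hinf] [CompleteSpace Hinf]
    (Hn : ℕ → Type u)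
    [∀ n, NormedAddCommGroup (Hn n)] [∀ n, InnerProductSpace ℂ (Hn n)]
    [∀ n, CompleteSpace (Hn n)]
    (J : ∀ n, Hn n →L[ℂ] Hinf) (hJ : ∀ n, ‖J n‖ ≤ 1) :
    ∃ (H : Type (max u v)) (_ : NormedAddCommGroup H) (_ : InnerProductSpace ℂ H)
      (_ : CompleteSpace H) (ι : ∀ n, Hn n →L[ℂ] H) (ιinf : Hinf →L[ℂ] H),
      (adjoint ιinf) ∘L ιinf = ContinuousLinearMap.id ℂ Hinf ∧
      (∀ n, (adjoint (ι n)) ∘L (ι n) = ContinuousLinearMap.id ℂ (Hn n)) ∧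
      (∀ n, (adjoint ιinf) ∘L (ι n) = J n) := by
  obtain ⟨H, _, _, _, ι, ιinf, h⟩ := parent_space_exists_general J hJ
  exact ⟨H, _, _, ‹_›, fun n => (ι n).toContinuousLinearMap, ιinf.toContinuousLinearMap,
    ιinf.adjoint_comp_self, fun n => (ι n).adjoint_comp_self,
    fun n => adjoint_comp_eq_of_inner_eq (h n)⟩
end

section
/- Let H₁, H₂ be complex Hilbert spaces, R₁ : H₁ → H₁ and R₂ : H₂ → H₂ bounded operators, δ ≥ 0, δ' ≥ 0, and let J, Ĵ : H₁ → H₂ be bounded operators with ‖J − Ĵ‖ ≤ δ'. Assume the quasi-unitary-equivalence estimates ‖J‖ ≤ 1 + δ, ‖(id_{H₁} − J* ∘ J) ∘ R₁‖ ≤ δ, ‖(id_{H₂} − J ∘ J*) ∘ R₂‖ ≤ δ and ‖J ∘ R₁ − R₂ ∘ J‖ ≤ δ. Then: ‖Ĵ‖ ≤ 1 + δ + δ'; ‖(id_{H₁} − Ĵ* ∘ Ĵ) ∘ R₁‖ ≤ δ + (2(1+δ)δ' + δ'²)·‖R₁‖; ‖(id_{H₂} − Ĵ ∘ Ĵ*)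 ∘ R₂‖ ≤ δ + (2(1+δ)δ' + δ'²)·‖R₂‖; and ‖Ĵ ∘ R₁ − R₂ ∘ Ĵ‖ ≤ δ + δ'·(‖R₁‖ + ‖R₂‖). (δ-quasi-unitary equivalence transfers to δ'-equivalent identification operators.) -/
open ContinuousLinearMap

/-!
Each estimate bounds an expression of degree at most two in the identification operator and its
adjoint. Writing `Jhat = J - (J - Jhat)` and expanding, the term without `J - Jhat` is bounded by
hypothesis. The remaining terms are linear or quadratic in `J - Jhat` and `(J - Jhat)*`, which have
the same norm. The estimate for `J J*` is the one for `J* J` applied to `J*`.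
-/

section NormedSpace

variable {𝕜 E F G : Type*} [NontriviallyNormedField 𝕜]
  [SeminormedAddCommGroup E] [NormedSpace 𝕜 E]
  [SeminormedAddCommGroup F] [NormedSpace 𝕜 F]
  [SeminormedAddCommGroup G] [NormedSpace 𝕜 G]

theorem norm_comp_le_norm_comp_add_norm_sub_mul (A B : F →L[𝕜] G) (R : E →L[𝕜] F) :
    ‖B ∘L R‖ ≤ ‖A ∘L R‖ + ‖A - B‖ * ‖R‖ :=
  calc ‖B ∘L R‖ ≤ ‖A ∘L R‖ + ‖A ∘L R - B ∘L R‖ := norm_le_norm_add_norm_sub _ _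
    _ = ‖A ∘L R‖ + ‖(A - B) ∘L R‖ := by rw [sub_comp]
    _ ≤ ‖A ∘L R‖ + ‖A - B‖ * ‖R‖ := by gcongr; exact opNorm_comp_le _ _

theorem norm_comp_sub_comp_le (A A' : F →L[𝕜] G) (B B' : E →L[𝕜] F) :
    ‖A ∘L B - A' ∘L B'‖ ≤
      ‖A‖ * ‖B - B'‖ + ‖A - A'‖ * ‖B‖ + ‖A - A'‖ * ‖B - B'‖ := by
  have expand : A ∘L B - A' ∘L B' =
      A ∘L (B - B') + (A - A') ∘L B - (A - A') ∘L (B - B') := by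
    simp only [comp_sub, sub_comp]
    abel
  rw [expand]
  exact norm_sub_le_of_le
    (norm_add_le_of_le (opNorm_comp_le _ _) (opNorm_comp_le _ _)) (opNorm_comp_le _ _)

theorem norm_intertwining_defect_le (S T : E →L[𝕜] F) (A : E →L[𝕜] E) (B : F →L[𝕜] F) :
    ‖T ∘L A - B ∘L T‖ ≤ ‖S ∘L A - B ∘L S‖ + ‖S - T‖ * (‖A‖ + ‖B‖) := by
  have expand : T ∘L A - B ∘L T =
      (S ∘L A - B ∘L S) + (B ∘L (S - T) - (S - T) ∘L A) := by
    simp only [comp_sub, sub_comp]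
    abel
  calc ‖T ∘L A - B ∘L T‖
      ≤ ‖S ∘L A - B ∘L S‖ + (‖B‖ * ‖S - T‖ + ‖S - T‖ * ‖A‖) := by
        rw [expand]
        exact norm_add_le_of_le le_rfl
          (norm_sub_le_of_le (opNorm_comp_le _ _) (opNorm_comp_le _ _))
    _ = ‖S ∘L A - B ∘L S‖ + ‖S - T‖ * (‖A‖ + ‖B‖) := by ring

end NormedSpace

section Adjoint

variable {𝕜 E F G : Type*} [RCLike 𝕜]
  [NormedAddCommGroup E] [InnerProductSpace 𝕜 E] [CompleteSpace E]
  [NormedAddCommGroup F] [InnerProductSpace 𝕜 F] [CompleteSpace F]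
  [SeminormedAddCommGroup G] [NormedSpace 𝕜 G]

theorem norm_adjoint_sub_adjoint (S T : E →L[𝕜] F) : ‖adjoint S - adjoint T‖ = ‖S - T‖ := by
  rw [← map_sub, LinearIsometryEquiv.norm_map]

theorem norm_adjoint_comp_self_sub_le (S T : E →L[𝕜] F) :
    ‖adjoint S ∘L S - adjoint T ∘L T‖ ≤ 2 * ‖S‖ * ‖S - T‖ + ‖S - T‖ ^ 2 := by
  refine (norm_comp_sub_comp_le _ _ _ _).trans_eq ?_
  rw [norm_adjoint_sub_adjoint, LinearIsometryEquiv.norm_map]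
  ring

theorem norm_id_sub_adjoint_comp_self_comp_le (S T : E →L[𝕜] F) (R : G →L[𝕜] E) :
    ‖(.id 𝕜 E - adjoint T ∘L T) ∘L R‖ ≤
      ‖(.id 𝕜 E - adjoint S ∘L S) ∘L R‖ + (2 * ‖S‖ * ‖S - T‖ + ‖S - T‖ ^ 2) * ‖R‖ := by
  refine (norm_comp_le_norm_comp_add_norm_sub_mul (.id 𝕜 E - adjoint S ∘L S) _ R).trans ?_
  rw [sub_sub_sub_cancel_left, norm_sub_rev]
  gcongr
  exact norm_adjoint_comp_self_sub_le S T

theorem norm_id_sub_self_comp_adjoint_comp_le (S T : E →L[𝕜] F) (R : G →L[𝕜] F) :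
    ‖(.id 𝕜 F - T ∘L adjoint T) ∘L R‖ ≤
      ‖(.id 𝕜 F - S ∘L adjoint S) ∘L R‖ + (2 * ‖S‖ * ‖S - T‖ + ‖S - T‖ ^ 2) * ‖R‖ := by
  simpa only [adjoint_adjoint, norm_adjoint_sub_adjoint, LinearIsometryEquiv.norm_map] using
    norm_id_sub_adjoint_comp_self_comp_le (adjoint S) (adjoint T) R

end Adjoint

theorem que_transfers_to_equivalent_identification_general {𝕜 H₁ H₂ : Type*} [RCLike 𝕜]
    [NormedAddCommGroup H₁] [InnerProductSpace 𝕜 H₁] [CompleteSpace H₁]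
    [NormedAddCommGroup H₂] [InnerProductSpace 𝕜 H₂] [CompleteSpace H₂]
    {R₁ : H₁ →L[𝕜] H₁} {R₂ : H₂ →L[𝕜] H₂} {δ δ' : ℝ} {J Jhat : H₁ →L[𝕜] H₂}
    (hclose : ‖J - Jhat‖ ≤ δ') (hJnorm : ‖J‖ ≤ 1 + δ)
    (h₁ : ‖(.id 𝕜 H₁ - adjoint J ∘L J) ∘L R₁‖ ≤ δ)
    (h₂ : ‖(.id 𝕜 H₂ - J ∘L adjoint J) ∘L R₂‖ ≤ δ)
    (h₃ : ‖J ∘L R₁ - R₂ ∘L J‖ ≤ δ) :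
    ‖Jhat‖ ≤ 1 + δ + δ' ∧
    ‖(.id 𝕜 H₁ - adjoint Jhat ∘L Jhat) ∘L R₁‖ ≤
      δ + (2 * (1 + δ) * δ' + δ' ^ 2) * ‖R₁‖ ∧
    ‖(.id 𝕜 H₂ - Jhat ∘L adjoint Jhat) ∘L R₂‖ ≤
      δ + (2 * (1 + δ) * δ' + δ' ^ 2) * ‖R₂‖ ∧
    ‖Jhat ∘L R₁ - R₂ ∘L Jhat‖ ≤ δ + δ' * (‖R₁‖ + ‖R₂‖) := by
  have hδ : 0 ≤ δ := (norm_nonneg _).trans h₃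
  have hloss : 2 * ‖J‖ * ‖J - Jhat‖ + ‖J - Jhat‖ ^ 2 ≤ 2 * (1 + δ) * δ' + δ' ^ 2 := by gcongr
  refine ⟨(norm_le_norm_add_norm_sub J Jhat).trans (add_le_add hJnorm hclose),
    (norm_id_sub_adjoint_comp_self_comp_le J Jhat R₁).trans ?_,
    (norm_id_sub_self_comp_adjoint_comp_le J Jhat R₂).trans ?_,
    (norm_intertwining_defect_le J Jhat R₁ R₂).trans ?_⟩ <;>
  gcongr

/-- Quasi-unitary equivalence transfers to `δ'`-equivalent identification operators,
with controlled loss in the estimates. -/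
theorem que_transfers_to_equivalent_identification {H₁ H₂ : Type*}
    [NormedAddCommGroup H₁] [InnerProductSpace ℂ H₁] [CompleteSpace H₁]
    [NormedAddCommGroup H₂] [InnerProductSpace ℂ H₂] [CompleteSpace H₂]
    (R₁ : H₁ →L[ℂ] H₁) (R₂ : H₂ →L[ℂ] H₂)
    (δ δ' : ℝ) (hδ : 0 ≤ δ) (hδ' : 0 ≤ δ')
    (J Jhat : H₁ →L[ℂ] H₂) (hclose : ‖J - Jhat‖ ≤ δ')
    (hJnorm : ‖J‖ ≤ 1 + δ)
    (h₁ : ‖(ContinuousLinearMap.id ℂ H₁ - (adjoint J) ∘L J) ∘L R₁‖ ≤ δ)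
    (h₂ : ‖(ContinuousLinearMap.id ℂ H₂ - J ∘L (adjoint J)) ∘L R₂‖ ≤ δ)
    (h₃ : ‖J ∘L R₁ - R₂ ∘L J‖ ≤ δ) :
    ‖Jhat‖ ≤ 1 + δ + δ' ∧
    ‖(ContinuousLinearMap.id ℂ H₁ - (adjoint Jhat) ∘L Jhat) ∘L R₁‖ ≤
      δ + (2 * (1 + δ) * δ' + δ' ^ 2) * ‖R₁‖ ∧
    ‖(ContinuousLinearMap.id ℂ H₂ - Jhat ∘L (adjoint Jhat)) ∘L R₂‖ ≤
      δ + (2 * (1 + δ) * δ' + δ' ^ 2) * ‖R₂‖ ∧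
    ‖Jhat ∘L R₁ - R₂ ∘L Jhat‖ ≤ δ + δ' * (‖R₁‖ + ‖R₂‖) :=
  que_transfers_to_equivalent_identification_general hclose hJnorm h₁ h₂ h₃
end

section
/- Let H₁, H₂ be complex Hilbert spaces, R₁ : H₁ → H₁ and R₂ : H₂ → H₂ bounded operators, δ ≥ 0, and J : H₁ → H₂ a bounded operator with 1 ≤ ‖J‖ ≤ 1 + δ, ‖(id_{H₁} − J* ∘ J) ∘ R₁‖ ≤ δ, ‖(id_{H₂} − J ∘ J*) ∘ R₂‖ ≤ δ and ‖J ∘ R₁ − R₂ ∘ J‖ ≤ δ. Define the rescaled identification operator Ĵ := ‖J‖⁻¹ • J and set δ̂ := δ·(1 + max(‖R₁‖, ‖R₂‖)·(2 + 3δ)). Then ‖J − Ĵ‖ = ‖J‖ − 1 ≤ δ, ‖Ĵ‖ = 1, and the estimates ‖(id_{H₁} − Ĵ* ∘ Ĵ) ∘ R₁‖ ≤ δ̂, ‖(id_{H₂} − Ĵ ∘ Ĵ*) ∘ R₂‖ ≤ δ̂ and ‖Ĵ ∘ R₁ − R₂ ∘ Ĵ‖ ≤ δ̂ hold. (One can always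 replace an identification operator of norm ≥ 1 by a contraction at the cost of a controlled loss δ ↦ δ̂ of order O(δ).) -/
open ContinuousLinearMap

/-!
Normalizing a nonzero vector `x` moves it by `|‖x‖ - 1|`. By the C⋆-identity `‖J* J‖ = ‖J‖ ^ 2`,
normalizing `J` also normalizes `J* J`, so the defect `id - J* J` moves by `|‖J‖ ^ 2 - 1|` in norm,
which is at most `δ (2 + δ)` when `1 ≤ ‖J‖ ≤ 1 + δ`. Applying this to `J*` in place of `J` controls
`id - J J*`.
-/

theorem norm_sub_inv_norm_smul_self {𝕜 E : Type*} [RCLike 𝕜] [NormedAddCommGroup E]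
    [NormedSpace 𝕜 E] {x : E} (hx : x ≠ 0) : ‖x - (‖x‖⁻¹ : 𝕜) • x‖ = |‖x‖ - 1| := by
  have hx' : (‖x‖ : 𝕜) ≠ 0 := by simpa using hx
  calc
    ‖x - (‖x‖⁻¹ : 𝕜) • x‖ = ‖((‖x‖ - 1 : ℝ) : 𝕜) • (‖x‖⁻¹ : 𝕜) • x‖ := by
      rw [RCLike.ofReal_sub, RCLike.ofReal_one, sub_smul, one_smul, smul_inv_smul₀ hx']
    _ = |‖x‖ - 1| := by
      rw [norm_smul, norm_smul_inv_norm hx, mul_one, RCLike.norm_ofReal]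

theorem abs_sq_sub_one_le {a δ : ℝ} (ha : 1 ≤ a) (haδ : a ≤ 1 + δ) :
    |a ^ 2 - 1| ≤ δ * (2 + δ) :=
  calc
    |a ^ 2 - 1| = a ^ 2 - 1 := abs_of_nonneg (sub_nonneg.2 (one_le_pow₀ ha))
    _ ≤ (1 + δ) ^ 2 - 1 := by gcongr
    _ = δ * (2 + δ) := by ring

theorem norm_smul_comp_sub_comp_smul {𝕜 E F : Type*} [NontriviallyNormedField 𝕜]
    [SeminormedAddCommGroup E] [NormedSpace 𝕜 E] [SeminormedAddCommGroup F] [NormedSpace 𝕜 F]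
    (c : 𝕜) (T : E →L[𝕜] F) (A : E →L[𝕜] E) (B : F →L[𝕜] F) :
    ‖(c • T) ∘L A - B ∘L (c • T)‖ = ‖c‖ * ‖T ∘L A - B ∘L T‖ := by
  rw [smul_comp, comp_smul, ← smul_sub, norm_smul]

section HilbertSpace

variable {𝕜 H₁ H₂ : Type*} [RCLike 𝕜]
  [NormedAddCommGroup H₁] [InnerProductSpace 𝕜 H₁] [CompleteSpace H₁]
  [NormedAddCommGroup H₂] [InnerProductSpace 𝕜 H₂] [CompleteSpace H₂]

theorem adjoint_inv_norm_smul_self (J : H₁ →L[𝕜] H₂) :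
    adjoint ((‖J‖⁻¹ : 𝕜) • J) = (‖adjoint J‖⁻¹ : 𝕜) • adjoint J := by
  rw [map_smulₛₗ, map_inv₀, RCLike.conj_ofReal, LinearIsometryEquiv.norm_map]

theorem adjoint_comp_inv_norm_smul_self (J : H₁ →L[𝕜] H₂) :
    adjoint ((‖J‖⁻¹ : 𝕜) • J) ∘L ((‖J‖⁻¹ : 𝕜) • J) =
      (‖adjoint J ∘L J‖⁻¹ : 𝕜) • (adjoint J ∘L J) := by
  rw [adjoint_inv_norm_smul_self, smul_comp, comp_smul, smul_smul, LinearIsometryEquiv.norm_map,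
    norm_adjoint_comp_self, RCLike.ofReal_mul, mul_inv]

theorem norm_id_sub_adjoint_comp_inv_norm_smul_comp_le {E : Type*} [SeminormedAddCommGroup E]
    [NormedSpace 𝕜 E] {J : H₁ →L[𝕜] H₂} (hJ : J ≠ 0) (R : E →L[𝕜] H₁) :
    ‖(ContinuousLinearMap.id 𝕜 H₁ -
        adjoint ((‖J‖⁻¹ : 𝕜) • J) ∘L ((‖J‖⁻¹ : 𝕜) • J)) ∘L R‖ ≤
      ‖(ContinuousLinearMap.id 𝕜 H₁ - adjoint J ∘L J) ∘L R‖ + |‖J‖ ^ 2 - 1| * ‖R‖ := by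
  set P := adjoint J ∘L J with hP
  have norm_P : ‖P‖ = ‖J‖ ^ 2 := by rw [hP, norm_adjoint_comp_self, sq]
  have P_ne_zero : P ≠ 0 := norm_ne_zero_iff.1 (norm_P ▸ pow_ne_zero 2 (norm_ne_zero_iff.2 hJ))
  rw [adjoint_comp_inv_norm_smul_self, ← hP]
  calc
    ‖(ContinuousLinearMap.id 𝕜 H₁ - (‖P‖⁻¹ : 𝕜) • P) ∘L R‖
      = ‖(ContinuousLinearMap.id 𝕜 H₁ - P) ∘L R + (P - (‖P‖⁻¹ : 𝕜) • P) ∘L R‖ := by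
        rw [← add_comp, sub_add_sub_cancel]
    _ ≤ ‖(ContinuousLinearMap.id 𝕜 H₁ - P) ∘L R‖ + ‖P - (‖P‖⁻¹ : 𝕜) • P‖ * ‖R‖ :=
        norm_add_le_of_le le_rfl (opNorm_comp_le _ _)
    _ = ‖(ContinuousLinearMap.id 𝕜 H₁ - P) ∘L R‖ + |‖J‖ ^ 2 - 1| * ‖R‖ := by
        rw [norm_sub_inv_norm_smul_self P_ne_zero, norm_P]

theorem norm_id_sub_comp_adjoint_inv_norm_smul_comp_le {E : Type*} [SeminormedAddCommGroup E]
    [NormedSpace 𝕜 E] {J : H₁ →L[𝕜] H₂} (hJ : J ≠ 0) (R : E →L[𝕜] H₂) :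
    ‖(ContinuousLinearMap.id 𝕜 H₂ -
        ((‖J‖⁻¹ : 𝕜) • J) ∘L adjoint ((‖J‖⁻¹ : 𝕜) • J)) ∘L R‖ ≤
      ‖(ContinuousLinearMap.id 𝕜 H₂ - J ∘L adjoint J) ∘L R‖ + |‖J‖ ^ 2 - 1| * ‖R‖ := by
  have hJ' : adjoint J ≠ 0 := by simpa using hJ
  have norm_le_of_adjoint := norm_id_sub_adjoint_comp_inv_norm_smul_comp_le hJ' R
  rwa [← adjoint_inv_norm_smul_self, adjoint_adjoint, adjoint_adjoint,
    LinearIsometryEquiv.norm_map] at norm_le_of_adjoint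

theorem rescaled_identification_operator_general
    (R₁ : H₁ →L[𝕜] H₁) (R₂ : H₂ →L[𝕜] H₂) (δ : ℝ)
    (J : H₁ →L[𝕜] H₂) (hJ1 : 1 ≤ ‖J‖) (hJ2 : ‖J‖ ≤ 1 + δ)
    (h₁ : ‖(ContinuousLinearMap.id 𝕜 H₁ - (adjoint J) ∘L J) ∘L R₁‖ ≤ δ)
    (h₂ : ‖(ContinuousLinearMap.id 𝕜 H₂ - J ∘L (adjoint J)) ∘L R₂‖ ≤ δ)
    (h₃ : ‖J ∘L R₁ - R₂ ∘L J‖ ≤ δ)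
    (Jhat : H₁ →L[𝕜] H₂) (hJhat : Jhat = (‖J‖⁻¹ : 𝕜) • J)
    (δhat : ℝ) (hδhat : δhat = δ * (1 + max ‖R₁‖ ‖R₂‖ * (2 + 3 * δ))) :
    ‖J - Jhat‖ = ‖J‖ - 1 ∧ ‖J‖ - 1 ≤ δ ∧ ‖Jhat‖ = 1 ∧
    ‖(ContinuousLinearMap.id 𝕜 H₁ - (adjoint Jhat) ∘L Jhat) ∘L R₁‖ ≤ δhat ∧
    ‖(ContinuousLinearMap.id 𝕜 H₂ - Jhat ∘L (adjoint Jhat)) ∘L R₂‖ ≤ δhat ∧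
    ‖Jhat ∘L R₁ - R₂ ∘L Jhat‖ ≤ δhat := by
  subst hJhat hδhat
  have hδ : 0 ≤ δ := by linarith
  have hJ : J ≠ 0 := norm_pos_iff.1 (zero_lt_one.trans_le hJ1)
  have loss_le {r : ℝ} (hr : r ≤ max ‖R₁‖ ‖R₂‖) :
      δ + |‖J‖ ^ 2 - 1| * r ≤ δ * (1 + max ‖R₁‖ ‖R₂‖ * (2 + 3 * δ)) :=
    calc
      _ ≤ δ + |‖J‖ ^ 2 - 1| * max ‖R₁‖ ‖R₂‖ := by gcongr
      _ ≤ δ + δ * (2 + δ) * max ‖R₁‖ ‖R₂‖ := by gcongr; exact abs_sq_sub_one_le hJ1 hJ2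
      _ ≤ δ + δ * (2 + 3 * δ) * max ‖R₁‖ ‖R₂‖ := by gcongr; linarith
      _ = _ := by ring
  refine ⟨?_, sub_le_iff_le_add'.2 hJ2, norm_smul_inv_norm hJ, ?_, ?_, ?_⟩
  · rw [norm_sub_inv_norm_smul_self hJ, abs_of_nonneg (sub_nonneg.2 hJ1)]
  · exact (norm_id_sub_adjoint_comp_inv_norm_smul_comp_le hJ R₁).trans
      ((add_le_add_left h₁ _).trans (loss_le (le_max_left _ _)))
  · exact (norm_id_sub_comp_adjoint_inv_norm_smul_comp_le hJ R₂).trans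
      ((add_le_add_left h₂ _).trans (loss_le (le_max_right _ _)))
  · calc
      _ = ‖J‖⁻¹ * ‖J ∘L R₁ - R₂ ∘L J‖ := by
        rw [norm_smul_comp_sub_comp_smul, norm_inv, RCLike.norm_ofReal, abs_norm]
      _ ≤ ‖J ∘L R₁ - R₂ ∘L J‖ :=
        mul_le_of_le_one_left (norm_nonneg _) (inv_le_one_of_one_le₀ hJ1)
      _ ≤ δ := h₃
      _ ≤ δ * (1 + max ‖R₁‖ ‖R₂‖ * (2 + 3 * δ)) :=
        le_mul_of_one_le_right hδ (le_add_of_nonneg_right (by positivity))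

end HilbertSpace

/-- An identification operator of norm at least `1` can be replaced by the rescaled
contraction `Ĵ = ‖J‖⁻¹ • J` at the cost of a controlled loss `δ ↦ δ̂` of order `O(δ)`
in the quasi-unitary-equivalence estimates. -/
theorem rescaled_identification_operator {H₁ H₂ : Type*}
    [NormedAddCommGroup H₁] [InnerProductSpace ℂ H₁] [CompleteSpace H₁]
    [NormedAddCommGroup H₂] [InnerProductSpace ℂ H₂] [CompleteSpace H₂]
    (R₁ : H₁ →L[ℂ] H₁) (R₂ : H₂ →L[ℂ] H₂) (δ : ℝ) (hδ : 0 ≤ δ)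
    (J : H₁ →L[ℂ] H₂) (hJ1 : 1 ≤ ‖J‖) (hJ2 : ‖J‖ ≤ 1 + δ)
    (h₁ : ‖(ContinuousLinearMap.id ℂ H₁ - (adjoint J) ∘L J) ∘L R₁‖ ≤ δ)
    (h₂ : ‖(ContinuousLinearMap.id ℂ H₂ - J ∘L (adjoint J)) ∘L R₂‖ ≤ δ)
    (h₃ : ‖J ∘L R₁ - R₂ ∘L J‖ ≤ δ)
    (Jhat : H₁ →L[ℂ] H₂) (hJhat : Jhat = ‖J‖⁻¹ • J)
    (δhat : ℝ) (hδhat : δhat = δ * (1 + max ‖R₁‖ ‖R₂‖ * (2 + 3 * δ))) :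
    ‖J - Jhat‖ = ‖J‖ - 1 ∧ ‖J‖ - 1 ≤ δ ∧ ‖Jhat‖ = 1 ∧
    ‖(ContinuousLinearMap.id ℂ H₁ - (adjoint Jhat) ∘L Jhat) ∘L R₁‖ ≤ δhat ∧
    ‖(ContinuousLinearMap.id ℂ H₂ - Jhat ∘L (adjoint Jhat)) ∘L R₂‖ ≤ δhat ∧
    ‖Jhat ∘L R₁ - R₂ ∘L Jhat‖ ≤ δhat :=
  rescaled_identification_operator_general R₁ R₂ δ J hJ1 hJ2 h₁ h₂ h₃ Jhat
    (by rw [hJhat, RCLike.real_smul_eq_coe_smul (K := ℂ), RCLike.ofReal_inv]) δhat hδhat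
end
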